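/- Let δ > 0 and k ≥ 2, and let {(S_i,G_i)}_{i≥1} be a sequence of systems of configurations of degree k with β_i := |G_i|^k/|S_i^{(k)}| → ∞ as i → ∞. Then there exists a sequence f_i → ∞ (one may take f_i = ((1−δ)·log(β_i)/2)^{1/(2k)}) such that for every sequence p(i) ∈ [0,1] with p(i) ≤ f_i·|S_i^{(k)}|^{−1/k} for all i, P_{p(i)}({A ⊆ G_i : A is (δ,S_i)_k-stable}) → 0 as i → ∞. -/

import Mathlib

open Finset Filter Topology

attribute [local instance] Classical.propDecidable

/-- The set `S^{(k)}` of tuples of `S` with pairwise distinct entries. -/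
noncomputable def distinctPart {k : ℕ} {G : Type} (S : Finset (Fin k → G)) :
    Finset (Fin k → G) :=
  S.filter fun x => Function.Injective x

/-- Probability assigned to a family `E` of subsets of `G` by the binomial random subset
`[G]_p`. -/
noncomputable def binomProb {G : Type} [Fintype G] (p : ℝ) (E : Finset (Finset G)) : ℝ :=
  ∑ A ∈ E, p ^ A.card * (1 - p) ^ (Fintype.card G - A.card)

/-- `X` is `(δ,S)_k`-stable. -/
def StableK {k : ℕ} {G : Type} (δ : ℝ) (S : Finset (Fin k → G)) (X : Finset G) : Prop :=
  ∀ X' ⊆ X, δ * (X.card : ℝ) ≤ (X'.card : ℝ) →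
    (∃ x ∈ S, ∀ j, x j ∈ X') ∧ (∃ x ∈ distinctPart S, ∀ j, x j ∈ X')

/-!
With `N = p|G|` and `β = |G| ^ k / |S^{(k)}|`, removing from a stable set `A` the first entry of
each configuration of `S^{(k)}` inside `A` must leave fewer than `δ|A|` elements; so `A` contains
more than `(1 - δ)|A|` of these configurations, whose expected number is `x = |S^{(k)}| p ^ k`.
Markov's inequality therefore bounds the probability of stability by `x`, and, combined with
Chebyshev's inequality for `|A|`, by `(4 + 2x / (1 - δ)) / N`. Put `t = β ^ (1 / (2k²))` and
`q = p |S^{(k)}| ^ (1 / k)`, so that `x = q ^ k` and `N = t ^ (2k) q`. For `q ≤ t` the first bound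
is `O(1 / t)` when `q t ≤ 1`, and the second one is otherwise.
-/

section BinomialRandomSubset

variable {G : Type} [Fintype G] {p : ℝ}

/-- The probability `p ^ |A| (1 - p) ^ (|G| - |A|)` that the binomial random subset `[G]_p`
is equal to `A`. -/
noncomputable def binomWeight (p : ℝ) (A : Finset G) : ℝ :=
  p ^ #A * (1 - p) ^ (Fintype.card G - #A)

/-- The expectation with respect to the binomial random subset `[G]_p`, as a linear functional
on the real functions of a subset of `G`. -/
noncomputable def binomExp (p : ℝ) : (Finset G → ℝ) →ₗ[ℝ] ℝ :=
  ∑ A : Finset G, binomWeight p A • LinearMap.proj A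

theorem binomExp_apply (p : ℝ) (F : Finset G → ℝ) :
    binomExp p F = ∑ A, binomWeight p A * F A := by
  simp [binomExp]

theorem binomWeight_nonneg (hp : p ∈ Set.Icc 0 1) (A : Finset G) : 0 ≤ binomWeight p A :=
  mul_nonneg (pow_nonneg hp.1 _) (pow_nonneg (sub_nonneg.2 hp.2) _)

theorem binomProb_nonneg (hp : p ∈ Set.Icc 0 1) (E : Finset (Finset G)) : 0 ≤ binomProb p E :=
  sum_nonneg fun A _ => binomWeight_nonneg hp A

theorem binomProb_le_binomExp (hp : p ∈ Set.Icc 0 1) {E : Finset (Finset G)} {F : Finset G → ℝ}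
    (hF : ∀ A, 0 ≤ F A) (hE : ∀ A ∈ E, 1 ≤ F A) : binomProb p E ≤ binomExp p F := by
  rw [binomExp_apply]
  calc
    binomProb p E ≤ ∑ A ∈ E, binomWeight p A * F A :=
      sum_le_sum fun A hA => le_mul_of_one_le_right (binomWeight_nonneg hp A) (hE A hA)
    _ ≤ ∑ A, binomWeight p A * F A :=
      sum_le_univ_sum_of_nonneg fun A => mul_nonneg (binomWeight_nonneg hp A) (hF A)

theorem binomWeight_union {T B : Finset G} (h : Disjoint T B) :
    binomWeight p (T ∪ B) = p ^ #T * (p ^ #B * (1 - p) ^ (#(univ \ T) - #B)) := by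
  rw [binomWeight, card_union_of_disjoint h, card_univ_sdiff, pow_add, mul_assoc, Nat.sub_sub]

theorem binomExp_superset (p : ℝ) (T : Finset G) :
    binomExp p (fun A => if T ⊆ A then 1 else 0) = p ^ #T := by
  have disjoint_of_mem {B : Finset G} (hB : B ∈ (univ \ T).powerset) : Disjoint T B :=
    disjoint_of_subset_right (mem_powerset.1 hB) disjoint_sdiff
  have supersets : univ.filter (T ⊆ ·) = (univ \ T).powerset.image (T ∪ ·) := by
    rw [← Icc_eq_image_powerset (subset_univ T)]
    ext A
    simp
  have injOn : Set.InjOn (T ∪ ·) ((univ \ T).powerset : Set (Finset G)) := fun B hB C hC h => by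
    rw [← union_sdiff_cancel_left (disjoint_of_mem hB), show T ∪ B = T ∪ C from h,
      union_sdiff_cancel_left (disjoint_of_mem hC)]
  calc
    binomExp p (fun A => if T ⊆ A then 1 else 0) = ∑ A with T ⊆ A, binomWeight p A := by
      simp [binomExp_apply, sum_filter]
    _ = ∑ B ∈ (univ \ T).powerset, binomWeight p (T ∪ B) := by
      rw [supersets, sum_image injOn]
    _ = p ^ #T * ∑ B ∈ (univ \ T).powerset, p ^ #B * (1 - p) ^ (#(univ \ T) - #B) := by
      rw [mul_sum]
      exact sum_congr rfl fun B hB => binomWeight_union (disjoint_of_mem hB)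
    _ = p ^ #T := by
      rw [sum_pow_mul_eq_add_pow, add_sub_cancel, one_pow, mul_one]

theorem binomExp_one (p : ℝ) : binomExp p (1 : Finset G → ℝ) = 1 := by
  simpa [Pi.one_def] using binomExp_superset p (∅ : Finset G)

theorem binomExp_card (p : ℝ) :
    binomExp p (fun A : Finset G => (#A : ℝ)) = Fintype.card G * p := by
  have card_eq_sum : (fun A : Finset G => (#A : ℝ)) =
      ∑ g : G, fun A => if {g} ⊆ A then 1 else 0 := by
    ext A
    simp
  simp only [card_eq_sum, map_sum, binomExp_superset, card_singleton, pow_one, sum_const,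
    card_univ, nsmul_eq_mul]

theorem binomExp_card_sq (p : ℝ) :
    binomExp p (fun A : Finset G => (#A : ℝ) ^ 2) =
      Fintype.card G * (p + (Fintype.card G - 1) * p ^ 2) := by
  have card_sq_eq_sum : (fun A : Finset G => (#A : ℝ) ^ 2) =
      ∑ g : G, ∑ h : G, fun A => if {g, h} ⊆ A then 1 else 0 := by
    ext A
    simp [insert_subset_iff, ite_and, sq]
  have pow_card_pair (g h : G) :
      p ^ #{g, h} = p ^ 2 + if g = h then p - p ^ 2 else 0 := by
    split_ifs with hgh
    · simp [hgh]
    · simp [card_pair hgh]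
  simp only [card_sq_eq_sum, map_sum, binomExp_superset, pow_card_pair, sum_add_distrib,
    sum_ite_eq, mem_univ, if_true, sum_const, card_univ, nsmul_eq_mul]
  ring

theorem binomExp_sq_card_sub_mean (p : ℝ) :
    binomExp p (fun A : Finset G => ((#A : ℝ) - Fintype.card G * p) ^ 2) =
      Fintype.card G * p * (1 - p) := by
  set N : ℝ := Fintype.card G * p with hN
  have expand : (fun A : Finset G => ((#A : ℝ) - N) ^ 2) =
      (fun A => (#A : ℝ) ^ 2) - (2 * N) • (fun A => (#A : ℝ)) + (N ^ 2) • 1 := by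
    ext A
    simp only [Pi.add_apply, Pi.sub_apply, Pi.smul_apply, Pi.one_apply, smul_eq_mul]
    ring
  rw [expand, map_add, map_sub, map_smul, map_smul, binomExp_card_sq, binomExp_card, binomExp_one,
    hN, smul_eq_mul, smul_eq_mul]
  ring

end BinomialRandomSubset

section PowerBounds

variable {R : Type*} [CommSemiring R] [LinearOrder R] [IsStrictOrderedRing R] {k : ℕ} {q t : R}

theorem le_pow_two_mul_mul (hk : k ≠ 0) (ht : 1 ≤ t) (hqt : 1 ≤ q * t) : t ≤ t ^ (2 * k) * q := by
  have ht0 : 0 < t := zero_lt_one.trans_le ht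
  have ht_pow : t ≤ t ^ k := le_self_pow₀ ht hk
  have hq0 : 0 < q := pos_of_mul_pos_left (zero_lt_one.trans_le hqt) ht0.le
  calc
    t ≤ t * (q * t) := le_mul_of_one_le_right ht0.le hqt
    _ = t * t * q := by ring
    _ ≤ t ^ k * t ^ k * q := by gcongr
    _ = t ^ (2 * k) * q := by ring

theorem pow_mul_le_pow_two_mul_mul (hk : k ≠ 0) (ht : 1 ≤ t) (hq : 0 ≤ q) (hqt : q ≤ t) :
    q ^ k * t ≤ t ^ (2 * k) * q := by
  obtain ⟨l, rfl⟩ := Nat.exists_eq_succ_of_ne_zero hk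
  have ht0 : 0 ≤ t := zero_le_one.trans ht
  calc
    q ^ (l + 1) * t = q ^ l * t * q := by ring
    _ ≤ t ^ l * t * q := by gcongr
    _ = t ^ (l + 1) * q := by ring
    _ ≤ t ^ (2 * (l + 1)) * q := by
      gcongr
      lia

end PowerBounds

section Configurations

variable {k : ℕ} {G : Type} {δ p t : ℝ}

/-- The number of configurations of `S^{(k)}` with all entries in `A`. -/
noncomputable def configCount (S : Finset (Fin k → G)) (A : Finset G) : ℕ :=
  #{x ∈ distinctPart S | ∀ j, x j ∈ A}

theorem StableK.lt_configCount (hk : k ≠ 0) {S : Finset (Fin k → G)} {A : Finset G}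
    (h : StableK δ S A) : (1 - δ) * #A < configCount S A := by
  by_contra! hle
  have : NeZero k := ⟨hk⟩
  set I : Finset G := {x ∈ distinctPart S | ∀ j, x j ∈ A}.image (· 0)
  have card_I : #I ≤ configCount S A := card_image_le
  have card_sdiff_I : (#A : ℝ) ≤ #(A \ I) + configCount S A := by
    exact_mod_cast (Nat.sub_le_iff_le_add.1 (le_card_sdiff I A)).trans (by lia)
  obtain ⟨-, x, hx, hxA⟩ := h (A \ I) sdiff_subset (by linarith)
  exact (mem_sdiff.1 (hxA 0)).2
    (mem_image_of_mem _ (mem_filter.2 ⟨hx, fun j => (mem_sdiff.1 (hxA j)).1⟩))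

theorem StableK.one_le_configCount (hk : k ≠ 0) (hδ : δ < 1) {S : Finset (Fin k → G)}
    {A : Finset G} (h : StableK δ S A) : 1 ≤ configCount S A := by
  have : (0 : ℝ) < configCount S A :=
    (mul_nonneg (sub_nonneg.2 hδ.le) (Nat.cast_nonneg _)).trans_lt (h.lt_configCount hk)
  exact_mod_cast this

theorem StableK.one_le_chebyshev_add_markov (hk : k ≠ 0) (hδ : δ < 1) {S : Finset (Fin k → G)}
    {A : Finset G} (h : StableK δ S A) {N : ℝ} (hN : 0 < N) :
    1 ≤ 4 / N ^ 2 * ((#A : ℝ) - N) ^ 2 + 2 / (1 - δ) / N * configCount S A := by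
  have hδ' : 0 < 1 - δ := sub_pos.2 hδ
  rcases le_or_gt (#A : ℝ) (N / 2) with small | large
  · have : 1 ≤ 4 / N ^ 2 * ((#A : ℝ) - N) ^ 2 := by
      rw [div_mul_eq_mul_div, one_le_div₀ (by positivity)]
      nlinarith
    exact le_add_of_le_of_nonneg this (by positivity)
  · have half_lt_count : (1 - δ) * (N / 2) < configCount S A :=
      (mul_lt_mul_of_pos_left large hδ').trans (h.lt_configCount hk)
    have : 1 ≤ 2 / (1 - δ) / N * (configCount S A : ℝ) := by
      rw [div_div, div_mul_eq_mul_div, one_le_div₀ (by positivity)]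
      linarith
    exact le_add_of_nonneg_of_le (by positivity) this

variable [Fintype G]

theorem binomExp_configCount (p : ℝ) (S : Finset (Fin k → G)) :
    binomExp p (fun A => (configCount S A : ℝ)) = #(distinctPart S) * p ^ k := by
  have configCount_eq_sum : (fun A => (configCount S A : ℝ)) =
      ∑ x ∈ distinctPart S, fun A => if univ.image x ⊆ A then 1 else 0 := by
    ext A
    simp [configCount, image_subset_iff]
  have card_image {x : Fin k → G} (hx : x ∈ distinctPart S) : #(univ.image x) = k := by
    rw [card_image_of_injective _ (mem_filter.1 hx).2, card_univ, Fintype.card_fin]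
  rw [configCount_eq_sum, map_sum,
    sum_congr rfl fun x hx => (binomExp_superset p _).trans (congrArg (p ^ ·) (card_image hx)),
    sum_const, nsmul_eq_mul]

theorem binomProb_stableK_le_card_mul_pow (hk : k ≠ 0) (hδ : δ < 1) (S : Finset (Fin k → G))
    (hp : p ∈ Set.Icc 0 1) :
    binomProb p (univ.filter (StableK δ S)) ≤ #(distinctPart S) * p ^ k := by
  rw [← binomExp_configCount]
  refine binomProb_le_binomExp hp (fun A => Nat.cast_nonneg _) fun A hA => ?_
  exact_mod_cast (mem_filter.1 hA).2.one_le_configCount hk hδ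

theorem binomProb_stableK_le_div_mean (hk : k ≠ 0) (hδ : δ < 1) (S : Finset (Fin k → G))
    (hp : p ∈ Set.Icc 0 1) (hN : 0 < Fintype.card G * p) :
    binomProb p (univ.filter (StableK δ S)) ≤
      (4 + 2 / (1 - δ) * (#(distinctPart S) * p ^ k)) / (Fintype.card G * p) := by
  set N : ℝ := Fintype.card G * p with hN_def
  have hδ' : 0 < 1 - δ := sub_pos.2 hδ
  calc
    binomProb p (univ.filter (StableK δ S))
      ≤ binomExp p ((4 / N ^ 2) • (fun A => ((#A : ℝ) - N) ^ 2) +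
          (2 / (1 - δ) / N) • (fun A => (configCount S A : ℝ))) :=
        binomProb_le_binomExp hp
          (fun A => add_nonneg (mul_nonneg (by positivity) (sq_nonneg _))
            (mul_nonneg (by positivity) (Nat.cast_nonneg _)))
          fun A hA => (mem_filter.1 hA).2.one_le_chebyshev_add_markov hk hδ hN
    _ = 4 / N ^ 2 * (N * (1 - p)) + 2 / (1 - δ) / N * (#(distinctPart S) * p ^ k) := by
        rw [map_add, map_smul, map_smul, binomExp_configCount, hN_def, binomExp_sq_card_sub_mean,
          smul_eq_mul, smul_eq_mul]
    _ = (4 * (1 - p) + 2 / (1 - δ) * (#(distinctPart S) * p ^ k)) / N := by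
        field_simp
    _ ≤ (4 + 2 / (1 - δ) * (#(distinctPart S) * p ^ k)) / N := by
        gcongr
        linarith [hp.1]

theorem binomProb_stableK_le_div (hk : k ≠ 0) (hδ : δ < 1) (S : Finset (Fin k → G))
    (hp : p ∈ Set.Icc 0 1) (ht : 1 ≤ t)
    (hG : t ^ (2 * k) * (#(distinctPart S) : ℝ) ^ (k : ℝ)⁻¹ ≤ Fintype.card G)
    (hpt : p * (#(distinctPart S) : ℝ) ^ (k : ℝ)⁻¹ ≤ t) :
    binomProb p (univ.filter (StableK δ S)) ≤ (4 + 2 / (1 - δ)) / t := by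
  set q : ℝ := p * (#(distinctPart S) : ℝ) ^ (k : ℝ)⁻¹ with hq_def
  have ht0 : 0 < t := zero_lt_one.trans_le ht
  have hδ' : 0 < 1 - δ := sub_pos.2 hδ
  have hq0 : 0 ≤ q := mul_nonneg hp.1 (by positivity)
  have expected_count : #(distinctPart S) * p ^ k = q ^ k := by
    rw [hq_def, mul_pow, Real.rpow_inv_natCast_pow (Nat.cast_nonneg _) hk, mul_comm]
  have le_mean : t ^ (2 * k) * q ≤ Fintype.card G * p := by
    calc
      t ^ (2 * k) * q = t ^ (2 * k) * (#(distinctPart S) : ℝ) ^ (k : ℝ)⁻¹ * p := by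
        rw [hq_def]; ring
      _ ≤ Fintype.card G * p := mul_le_mul_of_nonneg_right hG hp.1
  rcases le_or_gt (q * t) 1 with hqt | hqt
  · have hq1 : q ≤ 1 := (le_mul_of_one_le_right hq0 ht).trans hqt
    calc
      binomProb p (univ.filter (StableK δ S)) ≤ q ^ k :=
        expected_count ▸ binomProb_stableK_le_card_mul_pow hk hδ S hp
      _ ≤ q := pow_le_of_le_one hq0 hq1 hk
      _ ≤ 1 / t := (le_div_iff₀ ht0).2 hqt
      _ ≤ (4 + 2 / (1 - δ)) / t := by
        gcongr
        linarith [show 0 < 2 / (1 - δ) by positivity]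
  · have t_le_mean : t ≤ Fintype.card G * p := (le_pow_two_mul_mul hk ht hqt.le).trans le_mean
    have count_mul_le_mean : q ^ k * t ≤ Fintype.card G * p :=
      (pow_mul_le_pow_two_mul_mul hk ht hq0 hpt).trans le_mean
    have mean_pos : 0 < Fintype.card G * p := ht0.trans_le t_le_mean
    calc
      binomProb p (univ.filter (StableK δ S))
        ≤ (4 + 2 / (1 - δ) * q ^ k) / (Fintype.card G * p) :=
          expected_count ▸ binomProb_stableK_le_div_mean hk hδ S hp mean_pos
      _ ≤ (4 + 2 / (1 - δ)) / t := by
        rw [div_le_div_iff₀ mean_pos ht0, add_mul, add_mul, mul_assoc]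
        gcongr

/-- The ratio `β = |G| ^ k / |S^{(k)}|`; it is `0` when `S^{(k)}` is empty. -/
noncomputable def configRatio (S : Finset (Fin k → G)) : ℝ :=
  (Fintype.card G : ℝ) ^ k / #(distinctPart S)

/-- The growth rate `t = β ^ (1 / (2k²))` of the probabilities allowed, relative to
`|S^{(k)}| ^ (-1 / k)`. -/
noncomputable def configGrowth (S : Finset (Fin k → G)) : ℝ :=
  configRatio S ^ ((k * (2 * k) : ℕ) : ℝ)⁻¹

theorem configGrowth_pow_mul_le_card (hk : k ≠ 0) (S : Finset (Fin k → G)) :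
    configGrowth S ^ (2 * k) * (#(distinctPart S) : ℝ) ^ (k : ℝ)⁻¹ ≤ Fintype.card G := by
  have ratio_nonneg : 0 ≤ configRatio S := by unfold configRatio; positivity
  have ratio_mul_le : configRatio S * #(distinctPart S) ≤ (Fintype.card G : ℝ) ^ k := by
    rw [configRatio, div_mul_eq_mul_div, mul_div_assoc]
    exact mul_le_of_le_one_right (by positivity) (div_self_le_one _)
  have growth_pow : configGrowth S ^ (2 * k) = configRatio S ^ (k : ℝ)⁻¹ := by
    rw [configGrowth, Nat.cast_mul, mul_inv, Real.rpow_mul ratio_nonneg,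
      Real.rpow_inv_natCast_pow (by positivity) (by positivity)]
  calc
    configGrowth S ^ (2 * k) * (#(distinctPart S) : ℝ) ^ (k : ℝ)⁻¹
      = (configRatio S * #(distinctPart S)) ^ (k : ℝ)⁻¹ := by
        rw [growth_pow, Real.mul_rpow ratio_nonneg (Nat.cast_nonneg _)]
    _ ≤ ((Fintype.card G : ℝ) ^ k) ^ (k : ℝ)⁻¹ := by gcongr
    _ = Fintype.card G := Real.pow_rpow_inv_natCast (Nat.cast_nonneg _) hk

theorem card_distinctPart_pos (S : Finset (Fin k → G)) (hβ : 0 < configRatio S) :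
    0 < #(distinctPart S) := by
  refine Nat.pos_of_ne_zero fun h => hβ.ne' ?_
  rw [configRatio, h, Nat.cast_zero, div_zero]

end Configurations

section Asymptotics

variable {ι : Type*} {l : Filter ι} {k : ℕ} {δ : ℝ} {G : ι → Type} [∀ i, Fintype (G i)]
  {S : ∀ i, Finset (Fin k → G i)}

theorem tendsto_configGrowth (hk : k ≠ 0) (hβ : Tendsto (fun i => configRatio (S i)) l atTop) :
    Tendsto (fun i => configGrowth (S i)) l atTop :=
  (tendsto_rpow_atTop (by positivity)).comp hβ

theorem tendsto_binomProb_stableK (hk : k ≠ 0) (hδ : δ < 1)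
    (hβ : Tendsto (fun i => configRatio (S i)) l atTop) {p : ι → ℝ}
    (hp : ∀ᶠ i in l, p i ∈ Set.Icc 0 1)
    (hpf : ∀ᶠ i in l, p i ≤
      configGrowth (S i) * (#(distinctPart (S i)) : ℝ) ^ (-(1 : ℝ) / (k : ℝ))) :
    Tendsto (fun i => binomProb (p i) (univ.filter (StableK δ (S i)))) l (𝓝 0) := by
  have growth := tendsto_configGrowth hk hβ
  refine squeeze_zero' (hp.mono fun i hpi => binomProb_nonneg hpi _) ?_
    (growth.const_div_atTop (4 + 2 / (1 - δ)))
  filter_upwards [growth.eventually_ge_atTop 1, hp, hpf] with i ht hpi hpfi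
  refine binomProb_stableK_le_div hk hδ (S i) hpi ht (configGrowth_pow_mul_le_card hk (S i)) ?_
  set r : ℝ := (#(distinctPart (S i)) : ℝ) ^ (k : ℝ)⁻¹ with hr
  have p_le : p i ≤ configGrowth (S i) * r⁻¹ := by
    simpa only [hr, neg_div, one_div, Real.rpow_neg (Nat.cast_nonneg _)] using hpfi
  calc
    p i * r ≤ configGrowth (S i) * r⁻¹ * r := by gcongr
    _ = configGrowth (S i) * (r⁻¹ * r) := mul_assoc _ _ _
    _ ≤ configGrowth (S i) := mul_le_of_le_one_right (zero_le_one.trans ht) inv_mul_le_one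

theorem stmt7_general [l.NeBot] (hk : k ≠ 0) (δ : ℝ)
    (hβ : Tendsto (fun i => (Fintype.card (G i) : ℝ) ^ k / (#(distinctPart (S i)) : ℝ)) l atTop) :
    ∃ f : ι → ℝ, Tendsto f l atTop ∧
      ∀ p : ι → ℝ, (∀ i, 0 ≤ p i ∧ p i ≤ 1) →
        (∀ i, p i ≤ f i * (#(distinctPart (S i)) : ℝ) ^ (-(1 : ℝ) / (k : ℝ))) →
        Tendsto (fun i => binomProb (p i) (univ.filter (StableK δ (S i)))) l (𝓝 0) := by
  rcases lt_or_ge δ 1 with hδ | -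
  · exact ⟨_, tendsto_configGrowth hk hβ, fun p hp hpf =>
      tendsto_binomProb_stableK hk hδ hβ (.of_forall hp) (.of_forall hpf)⟩
  · -- For `δ ≥ 1` the probabilities need not tend to `0`: if `δ > 1`, every nonempty set is
    -- stable. A threshold with a negative value at `i₀` leaves no admissible `p`.
    obtain ⟨i₀, hi₀⟩ := (hβ.eventually_gt_atTop 0).exists
    have card_pos : (0 : ℝ) < #(distinctPart (S i₀)) :=
      Nat.cast_pos.2 (card_distinctPart_pos (S i₀) hi₀)
    refine ⟨fun i => configRatio (S i) + -(configRatio (S i₀) + 1),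
      tendsto_atTop_add_const_right _ _ hβ, fun p hp hpf => ?_⟩
    have p_neg : p i₀ < 0 := (hpf i₀).trans_lt
      (mul_neg_of_neg_of_pos (by linarith) (Real.rpow_pos_of_pos card_pos _))
    exact absurd (hp i₀).1 p_neg.not_ge

end Asymptotics

/-- the 0-statement for configurations and small probabilities. -/
theorem stmt7 (k : ℕ) (hk : 2 ≤ k) (δ : ℝ) (hδ0 : 0 < δ)
    (G : ℕ → Type) [∀ i, Fintype (G i)]
    (S : ∀ i, Finset (Fin k → G i))
    (hβ : Tendsto
      (fun i => (Fintype.card (G i) : ℝ) ^ k / ((distinctPart (S i)).card : ℝ))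
      atTop atTop) :
    ∃ f : ℕ → ℝ, Tendsto f atTop atTop ∧
      ∀ p : ℕ → ℝ, (∀ i, 0 ≤ p i ∧ p i ≤ 1) →
        (∀ i, p i ≤ f i * ((distinctPart (S i)).card : ℝ) ^ (-(1:ℝ)/(k:ℝ))) →
        Tendsto (fun i => binomProb (p i)
            (Finset.univ.filter (fun A : Finset (G i) => StableK δ (S i) A)))
          atTop (nhds 0) := by
  exact stmt7_general (by lia) δ hβ
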